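/- There exists a constant C_0 > 0 with the following property. Let N, \omega be positive integers and \lambda_1, ..., \lambda_N reals such that any integer relation u_1\lambda_1 + ... + u_N\lambda_N = 0 with max |u_\ell| \le 6\omega \log(N\omega/C_0) forces u_1 = ... = u_N = 0. Set \Xi = \min |\sum_k \lambda_k u_k| over integer vectors (u_k) with |u_k| \le 6\omega\log(N\omega/C_0) and \sum_k \lambda_k u_k \ne 0. If T > (3/(\pi\Xi)) ((2\sqrt{3}\omega/C_0)\sqrt{\log(N\omega/C_0)})^N, then for any reals d, \beta_1, ..., \beta_N there exists t \in [d, d+T] with \max_{1\le j\le N} \|t\lambda_j - \beta_j\| \le 1/\omega. -/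

import Mathlib

/-- Distance from a real number to the nearest integer. -/
noncomputable def nearestIntDist (x : ℝ) : ℝ := |x - round x|

/-!
Suppose every `t ∈ [d, d + T]` leaves some `t λ_j - β_j` far from the integers. Take a nonnegative
trigonometric polynomial `G` with nonnegative coefficients and constant term `c` which is at most
`ε ≤ c / (2N)` far from the integers. At each `t` the product `∏_j G(t λ_j - β_j)` is then at most
`ε ∑_j ∏_{i ≠ j} G(t λ_i - β_i)`. Expanding, every nonconstant term has frequency at least `Ξ`, so
the integral of a product of `k` factors is `c ^ k T`, up to `G(0) ^ k / (π Ξ)`. Integrating the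
inequality forces `c ^ N T / 2 ≤ (3 / 2) G(0) ^ N / (π Ξ)`, an upper bound for `T`.

The kernel is `G = |D| ^ (2r)` with `D` a Dirichlet sum of about `2ω` terms and `r` about
`log (Nω)`. Its constant term is an integral over a period, bounded below by the contribution of
`|x| ≤ 1 / (7 n √r)`; this is the origin of the factor `ω √(log (Nω))`.
-/

open Finset Real
open scoped FourierTransform

section Character

lemma fourierChar_intCast (k : ℤ) : 𝐞 (k : ℝ) = 1 := by
  ext
  rw [fourierChar_apply, Circle.coe_one, Complex.exp_eq_one_iff]
  exact ⟨k, by push_cast; ring⟩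

lemma re_fourierChar (x : ℝ) : (𝐞 x : ℂ).re = cos (2 * π * x) :=
  Complex.exp_ofReal_mul_I_re _

lemma coe_fourierChar_sum {ι : Type*} (s : Finset ι) (x : ι → ℝ) :
    (𝐞 (∑ i ∈ s, x i) : ℂ) = ∏ i ∈ s, (𝐞 (x i) : ℂ) :=
  map_prod (Circle.coeHom.comp (AddChar.toMonoidHom 𝐞)) (fun i ↦ Multiplicative.ofAdd (x i)) s

lemma fourierChar_sub_round (x : ℝ) : 𝐞 (x - round x) = 𝐞 x := by
  rw [AddChar.map_sub_eq_div, fourierChar_intCast, div_one]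

lemma four_mul_nearestIntDist_le_norm_fourierChar_sub_one (x : ℝ) :
    4 * nearestIntDist x ≤ ‖(𝐞 x : ℂ) - 1‖ := by
  set w := x - round x with hw
  have hπw : |π * w| ≤ π / 2 := by
    rw [abs_mul, abs_of_pos pi_pos]
    nlinarith [abs_sub_round x, pi_pos]
  have hchord : ‖(𝐞 x : ℂ) - 1‖ = 2 * |sin (π * w)| := by
    rw [← fourierChar_sub_round, ← hw, fourierChar_apply, mul_comm,
      Complex.norm_exp_I_mul_ofReal_sub_one, norm_mul, norm_eq_abs, norm_eq_abs, abs_two]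
    ring_nf
  have hsin := mul_abs_le_abs_sin hπw
  rw [abs_mul, abs_of_pos pi_pos, ← mul_assoc, div_mul_cancel₀ _ pi_ne_zero] at hsin
  rw [hchord, nearestIntDist, ← hw]
  linarith

lemma integral_fourierChar {a : ℝ} (ha : a ≠ 0) (b p q : ℝ) :
    ∫ t in p..q, (𝐞 (a * t + b) : ℂ) =
      (𝐞 (a * q + b) - 𝐞 (a * p + b)) / (2 * π * a * Complex.I) := by
  have hc : 2 * π * a * Complex.I ≠ 0 := by simp [ha, pi_ne_zero]
  have hexp (t : ℝ) : (𝐞 (a * t + b) : ℂ) = 𝐞 b * Complex.exp (2 * π * a * Complex.I * t) := by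
    simp only [fourierChar_apply, ← Complex.exp_add]
    congr 1
    push_cast
    ring
  simp only [hexp]
  rw [intervalIntegral.integral_const_mul, integral_exp_mul_complex hc]
  ring

lemma norm_integral_fourierChar_le {a : ℝ} (ha : a ≠ 0) (b p q : ℝ) :
    ‖∫ t in p..q, (𝐞 (a * t + b) : ℂ)‖ ≤ 1 / (π * |a|) := by
  have hnum : ‖(𝐞 (a * q + b) : ℂ) - 𝐞 (a * p + b)‖ ≤ 2 := by
    refine (norm_sub_le _ _).trans ?_
    rw [Circle.norm_coe, Circle.norm_coe]
    norm_num
  have hden : ‖(2 * π * a * Complex.I : ℂ)‖ = 2 * π * |a| := by simp [abs_of_pos pi_pos]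
  rw [integral_fourierChar ha, norm_div, hden]
  calc _ ≤ 2 / (2 * π * |a|) := by gcongr
    _ = 1 / (π * |a|) := by field_simp

lemma integral_fourierChar_intCast_mul (k : ℤ) (a : ℝ) :
    ∫ x in a..(a + 1), (𝐞 (k * x) : ℂ) = if k = 0 then 1 else 0 := by
  split_ifs with hk
  · simp [hk]
  · have hperiod : 𝐞 (k * (a + 1)) = 𝐞 (k * a) := by
      rw [mul_add, mul_one, AddChar.map_add_eq_mul, fourierChar_intCast, mul_one]
    simpa [hperiod] using integral_fourierChar (Int.cast_ne_zero.mpr hk) 0 a (a + 1)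

end Character

section ExpSum

variable {I : Type*}

/-- The frequencies, with multiplicity, of the trigonometric polynomial
`|∑ i, e(f i * x)| ^ (2 * r)`. -/
def powFreq (f : I → ℤ) (r : ℕ) (u : Fin r → I × I) : ℤ := ∑ s, (f (u s).1 - f (u s).2)

lemma abs_powFreq_le {f : I → ℤ} {M : ℝ} (hf : ∀ i j, |(f i - f j : ℝ)| ≤ M) (r : ℕ)
    (u : Fin r → I × I) : |(powFreq f r u : ℝ)| ≤ M * r := by
  rw [powFreq, Int.cast_sum]
  calc _ ≤ ∑ s, |((f (u s).1 - f (u s).2 : ℤ) : ℝ)| := abs_sum_le_sum_abs _ _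
    _ ≤ ∑ _s : Fin r, M := sum_le_sum fun s _ ↦ by rw [Int.cast_sub]; exact hf _ _
    _ = M * r := by simp [mul_comm]

variable [Fintype I]

/-- The exponential sum `∑ i, e(f i * x)` with integer frequencies `f i`. It encodes a trigonometric
polynomial with nonnegative integer coefficients: a coefficient is the number of indices sharing a
frequency, so the constant term is `#{i | f i = 0}`. -/
noncomputable def expSum (f : I → ℤ) (x : ℝ) : ℂ := ∑ i, (𝐞 (f i * x) : ℂ)

lemma continuous_expSum (f : I → ℤ) : Continuous (expSum f) := by
  unfold expSum
  fun_prop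

lemma continuous_of_ofReal_eq_expSum {f : I → ℤ} {G : ℝ → ℝ}
    (hG : ∀ x, (G x : ℂ) = expSum f x) : Continuous G :=
  (Complex.continuous_re.comp (continuous_expSum f)).congr fun x ↦ by simp [← hG]

lemma norm_expSum_sq (f : I → ℤ) (x : ℝ) :
    ((‖expSum f x‖ ^ 2 : ℝ) : ℂ) = expSum (fun p : I × I ↦ f p.1 - f p.2) x := by
  simp only [expSum]
  rw [Complex.ofReal_pow, ← Complex.mul_conj', map_sum, Fintype.sum_prod_type, sum_mul_sum]
  refine sum_congr rfl fun i _ ↦ sum_congr rfl fun j _ ↦ ?_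
  rw [← Circle.coe_inv_eq_conj, ← AddChar.map_neg_eq_inv, ← Circle.coe_mul,
    ← AddChar.map_add_eq_mul]
  push_cast
  ring_nf

lemma expSum_pow (f : I → ℤ) (r : ℕ) (x : ℝ) :
    expSum f x ^ r = expSum (fun u : Fin r → I ↦ ∑ s, f (u s)) x := by
  simp only [expSum, Fintype.sum_pow, Int.cast_sum, sum_mul, coe_fourierChar_sum]

lemma norm_expSum_pow (f : I → ℤ) (r : ℕ) (x : ℝ) :
    ((‖expSum f x‖ ^ (2 * r) : ℝ) : ℂ) = expSum (powFreq f r) x := by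
  rw [pow_mul, Complex.ofReal_pow, norm_expSum_sq, expSum_pow]
  rfl

lemma integral_expSum (f : I → ℤ) (a : ℝ) :
    ∫ x in a..(a + 1), expSum f x = #{i | f i = 0} := by
  simp only [expSum]
  rw [intervalIntegral.integral_finsetSum]
  · simp [integral_fourierChar_intCast_mul]
  · exact fun i _ ↦ Continuous.intervalIntegrable (by fun_prop) _ _

lemma card_mul_le_re_expSum {f : I → ℤ} {M : ℝ} (hf : ∀ i, |(f i : ℝ)| ≤ M) (x : ℝ) :
    Fintype.card I * (1 - 2 * (π * M * x) ^ 2) ≤ (expSum f x).re := by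
  have hterm (i : I) : 1 - 2 * (π * M * x) ^ 2 ≤ cos (2 * π * (f i * x)) := by
    have hsq : (f i : ℝ) ^ 2 * (π * x) ^ 2 ≤ M ^ 2 * (π * x) ^ 2 :=
      mul_le_mul_of_nonneg_right (sq_le_sq.mpr ((hf i).trans (le_abs_self M))) (sq_nonneg _)
    linarith [one_sub_sq_div_two_le_cos (x := 2 * π * (f i * x))]
  simp only [expSum, Complex.re_sum, re_fourierChar]
  simpa using card_nsmul_le_sum univ _ _ fun i _ ↦ hterm i

lemma card_pow_div_two_le_norm_expSum_pow {f : I → ℤ} {M : ℝ} (hf : ∀ i j, |(f i - f j : ℝ)| ≤ M)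
    {r : ℕ} (hr : 0 < r) {x : ℝ} (hx : (7 * M * x) ^ 2 * r ≤ 1) :
    (Fintype.card I : ℝ) ^ (2 * r) / 2 ≤ ‖expSum f x‖ ^ (2 * r) := by
  set y := 2 * (π * M * x) ^ 2 with hy
  have hry : r * y ≤ 1 / 2 := by
    have hπ : π ^ 2 ≤ 10 := by nlinarith [pi_lt_d2, pi_pos]
    have : π ^ 2 * ((M * x) ^ 2 * r) ≤ 10 * ((M * x) ^ 2 * r) := by gcongr
    rw [hy]
    linarith
  have hy1 : y ≤ 1 := by
    have : (1 : ℝ) ≤ r := by exact_mod_cast hr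
    have : 0 ≤ y := by positivity
    nlinarith
  have hsq : (Fintype.card I : ℝ) ^ 2 * (1 - y) ≤ ‖expSum f x‖ ^ 2 := by
    have h := card_mul_le_re_expSum (f := fun p : I × I ↦ f p.1 - f p.2) (M := M)
      (fun p ↦ by push_cast; exact hf _ _) x
    rw [← norm_expSum_sq, Complex.ofReal_re, Fintype.card_prod, Nat.cast_mul, ← sq] at h
    exact h
  calc (Fintype.card I : ℝ) ^ (2 * r) / 2
      ≤ (Fintype.card I : ℝ) ^ (2 * r) * (1 + r * -y) := by
        rw [div_eq_mul_inv]
        gcongr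
        linarith
    _ ≤ (Fintype.card I : ℝ) ^ (2 * r) * (1 + -y) ^ r := by
        gcongr
        exact one_add_mul_le_pow (by linarith) r
    _ = ((Fintype.card I : ℝ) ^ 2 * (1 - y)) ^ r := by rw [mul_pow, ← pow_mul, ← sub_eq_add_neg]
    _ ≤ ‖expSum f x‖ ^ (2 * r) := by
        rw [pow_mul]
        exact pow_le_pow_left₀ (mul_nonneg (by positivity) (by linarith)) hsq r

lemma card_pow_div_le_card_powFreq_eq_zero {f : I → ℤ} {M : ℝ} (hM : 1 ≤ M)
    (hf : ∀ i j, |(f i - f j : ℝ)| ≤ M) {r : ℕ} (hr : 0 < r) :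
    (Fintype.card I : ℝ) ^ (2 * r) / (7 * M * √r) ≤ #{u | powFreq f r u = 0} := by
  have hr1 : (1 : ℝ) ≤ r := by exact_mod_cast hr
  have hs : 1 ≤ √(r : ℝ) := one_le_sqrt.mpr hr1
  set δ : ℝ := 1 / (7 * M * √r) with hδ
  have hδ0 : 0 < δ := by positivity
  have hδ1 : δ ≤ 1 / 2 := one_div_le_one_div_of_le two_pos (by nlinarith)
  have hδr : (7 * M * δ) ^ 2 * r = 1 := by
    have hs2 : √(r : ℝ) ^ 2 = r := sq_sqrt (by linarith)
    rw [← hs2, hδ]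
    field_simp
  have hcont : Continuous fun x ↦ ‖expSum f x‖ ^ (2 * r) := (continuous_expSum f).norm.pow _
  calc (Fintype.card I : ℝ) ^ (2 * r) / (7 * M * √r)
      = ∫ _x in (-δ)..δ, (Fintype.card I : ℝ) ^ (2 * r) / 2 := by
        rw [intervalIntegral.integral_const, smul_eq_mul, hδ]
        ring
    _ ≤ ∫ x in (-δ)..δ, ‖expSum f x‖ ^ (2 * r) := by
        refine intervalIntegral.integral_mono_on (by linarith)
          (continuous_const.intervalIntegrable _ _) (hcont.intervalIntegrable _ _) fun x hx ↦ ?_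
        refine card_pow_div_two_le_norm_expSum_pow hf hr (hδr ▸ ?_)
        have hx2 : x ^ 2 ≤ δ ^ 2 := sq_le_sq' hx.1 hx.2
        rw [mul_pow, mul_pow _ δ]
        gcongr
    _ ≤ ∫ x in (-1 / 2)..(-1 / 2 + 1), ‖expSum f x‖ ^ (2 * r) :=
        intervalIntegral.integral_mono_interval (by linarith) (by linarith) (by linarith)
          (.of_forall fun x ↦ by positivity) (hcont.intervalIntegrable _ _)
    _ = #{u | powFreq f r u = 0} := by
        apply Complex.ofReal_injective
        rw [← intervalIntegral.integral_ofReal]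
        simp only [norm_expSum_pow, integral_expSum, Complex.ofReal_natCast]

lemma norm_expSum_fin_mul_nearestIntDist_le (n : ℕ) (x : ℝ) :
    ‖expSum (fun k : Fin n ↦ (k : ℤ)) x‖ * (2 * nearestIntDist x) ≤ 1 := by
  have hgeom : expSum (fun k : Fin n ↦ (k : ℤ)) x * ((𝐞 x : ℂ) - 1) = (𝐞 x : ℂ) ^ n - 1 := by
    simp only [expSum, Int.cast_natCast, ← nsmul_eq_mul, AddChar.map_nsmul_eq_pow, Circle.coe_pow]
    rw [Fin.sum_univ_eq_sum_range (fun k ↦ (𝐞 x : ℂ) ^ k), geom_sum_mul]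
  have hnum : ‖(𝐞 x : ℂ) ^ n - 1‖ ≤ 2 := by
    refine (norm_sub_le _ _).trans ?_
    rw [norm_pow, Circle.norm_coe]
    norm_num
  rw [← hgeom, norm_mul] at hnum
  have := mul_le_mul_of_nonneg_left (four_mul_nearestIntDist_le_norm_fourierChar_sub_one x)
    (norm_nonneg (expSum (fun k : Fin n ↦ (k : ℤ)) x))
  linarith

lemma norm_expSum_fin_le (n : ℕ) {x δ : ℝ} (hδ : 0 < δ) (hx : δ ≤ nearestIntDist x) :
    ‖expSum (fun k : Fin n ↦ (k : ℤ)) x‖ ≤ 1 / (2 * δ) := by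
  rw [le_div_iff₀ (by positivity)]
  refine le_trans ?_ (norm_expSum_fin_mul_nearestIntDist_le n x)
  gcongr

end ExpSum

section Gap

variable {ι κ I : Type*} [Fintype ι] [Fintype κ] [Fintype I]

/-- Every nonzero integer vector with entries at most `M` gives a linear form in `lam` of absolute
value at least `Ξ`. For `Ξ > 0` this combines the absence of small integer relations with the lower
bound on the values of small integer forms. -/
def HasFormGap (lam : ι → ℝ) (M Ξ : ℝ) : Prop :=
  ∀ v : ι → ℤ, (∀ j, |(v j : ℝ)| ≤ M) → v ≠ 0 → Ξ ≤ |∑ j, lam j * v j|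

lemma HasFormGap.mono {lam : ι → ℝ} {M M' Ξ : ℝ} (h : HasFormGap lam M Ξ) (hM : M' ≤ M) :
    HasFormGap lam M' Ξ :=
  fun v hv hv0 ↦ h v (fun j ↦ (hv j).trans hM) hv0

lemma HasFormGap.comp_injective {lam : ι → ℝ} {M Ξ : ℝ} (h : HasFormGap lam M Ξ) (hM : 0 ≤ M)
    {e : κ → ι} (he : Function.Injective e) : HasFormGap (lam ∘ e) M Ξ := by
  intro v hv hv0
  set w : ι → ℤ := Function.extend e v 0
  have hwe (j : κ) : w (e j) = v j := he.extend_apply v 0 j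
  have hw_out (i : ι) (hi : i ∉ Set.range e) : w i = 0 := Function.extend_apply' _ _ _ hi
  have hw (i : ι) : |(w i : ℝ)| ≤ M := by
    by_cases hi : i ∈ Set.range e
    · obtain ⟨j, rfl⟩ := hi
      exact hwe j ▸ hv j
    · simpa [hw_out i hi] using hM
  have hw0 : w ≠ 0 := fun h0 ↦ hv0 (funext fun j ↦ by rw [← hwe, h0]; rfl)
  have hsum : ∑ j, lam (e j) * v j = ∑ i, lam i * w i :=
    Fintype.sum_of_injective e he _ _ (fun i hi ↦ by simp [hw_out i hi]) fun j ↦ by rw [hwe]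
  exact (h w hw hw0).trans_eq (congrArg abs hsum.symm)

lemma prod_expSum [DecidableEq ι] (f : I → ℤ) (lam β : ι → ℝ) (t : ℝ) :
    ∏ j, expSum f (t * lam j - β j) =
      ∑ u : ι → I, (𝐞 ((∑ j, lam j * f (u j)) * t + -∑ j, β j * f (u j)) : ℂ) := by
  simp only [expSum]
  rw [prod_univ_sum, Fintype.piFinset_univ]
  refine sum_congr rfl fun u _ ↦ ?_
  rw [← coe_fourierChar_sum, ← sub_eq_add_neg, sum_mul, ← sum_sub_distrib]
  congr 3 with j
  ring

lemma norm_integral_prod_expSum_sub_le {f : I → ℤ} {M Ξ : ℝ} (hf : ∀ i, |(f i : ℝ)| ≤ M)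
    {lam : ι → ℝ} (hΞ : 0 < Ξ) (hlam : HasFormGap lam M Ξ) (β : ι → ℝ) (d T : ℝ) :
    ‖(∫ t in d..(d + T), ∏ j, expSum f (t * lam j - β j)) -
        (#{i | f i = 0} : ℂ) ^ Fintype.card ι * T‖ ≤
      (Fintype.card I : ℝ) ^ Fintype.card ι / (π * Ξ) := by
  classical
  have hconst : (#{i | f i = 0} : ℂ) ^ Fintype.card ι * T =
      ∑ u : ι → I, if ∀ j, f (u j) = 0 then (T : ℂ) else 0 := by
    have hpi : ({u | ∀ j, f (u j) = 0} : Finset (ι → I)) =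
        Fintype.piFinset fun _ ↦ {i | f i = 0} := by ext; simp
    rw [← sum_filter, sum_const, nsmul_eq_mul, hpi, Fintype.card_piFinset]
    simp
  have hterm (u : ι → I) :
      ‖(∫ t in d..(d + T), (𝐞 ((∑ j, lam j * f (u j)) * t + -∑ j, β j * f (u j)) : ℂ)) -
        if ∀ j, f (u j) = 0 then (T : ℂ) else 0‖ ≤ 1 / (π * Ξ) := by
    split_ifs with hu
    · have hint : ∫ t in d..(d + T),
          (𝐞 ((∑ j, lam j * f (u j)) * t + -∑ j, β j * f (u j)) : ℂ) = T := by simp [hu]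
      rw [hint, sub_self, norm_zero]
      positivity
    · have hgap := hlam (fun j ↦ f (u j)) (fun j ↦ hf _) fun h0 ↦ hu (congrFun h0)
      rw [sub_zero]
      refine (norm_integral_fourierChar_le (abs_pos.mp (hΞ.trans_le hgap)) _ _ _).trans ?_
      gcongr
  simp only [prod_expSum]
  rw [intervalIntegral.integral_finsetSum, hconst, ← sum_sub_distrib]
  · calc _ ≤ ∑ _u : ι → I, 1 / (π * Ξ) := norm_sum_le_of_le _ fun u _ ↦ hterm u
      _ = _ := by simp [div_eq_mul_inv]
  · exact fun u _ ↦ Continuous.intervalIntegrable (by fun_prop) _ _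

lemma abs_integral_prod_sub_le {f : I → ℤ} {G : ℝ → ℝ} (hG : ∀ x, (G x : ℂ) = expSum f x)
    {M Ξ : ℝ} (hf : ∀ i, |(f i : ℝ)| ≤ M) {lam : ι → ℝ} (hΞ : 0 < Ξ)
    (hlam : HasFormGap lam M Ξ) (β : ι → ℝ) (d T : ℝ) :
    |(∫ t in d..(d + T), ∏ j, G (t * lam j - β j)) - (#{i | f i = 0} : ℝ) ^ Fintype.card ι * T| ≤
      (Fintype.card I : ℝ) ^ Fintype.card ι / (π * Ξ) := by
  rw [← norm_eq_abs, ← Complex.norm_real, Complex.ofReal_sub, ← intervalIntegral.integral_ofReal]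
  push_cast
  simp only [hG]
  exact norm_integral_prod_expSum_sub_le hf hΞ hlam β d T

end Gap

section UnionBound

variable {ι I : Type*} [Fintype ι] [Fintype I]

lemma prod_le_mul_sum_prod_ne [DecidableEq ι] {g : ι → ℝ} (hg : ∀ j, 0 ≤ g j) {ε : ℝ}
    (hε : ∃ j, g j ≤ ε) :
    ∏ j, g j ≤ ε * ∑ j : ι, ∏ i : {i // i ≠ j}, g i := by
  obtain ⟨j, hj⟩ := hε
  have hnonneg (k : ι) : 0 ≤ ∏ i : {i // i ≠ k}, g i := prod_nonneg fun _ _ ↦ hg _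
  rw [Fintype.prod_eq_mul_prod_subtype_ne _ j]
  exact mul_le_mul hj (single_le_sum (fun k _ ↦ hnonneg k) (mem_univ j)) (hnonneg j)
    ((hg j).trans hj)

lemma integral_prod_le_mul_sum_integral_prod_ne [DecidableEq ι] {F : ι → ℝ → ℝ}
    (hF : ∀ j, Continuous (F j)) (hF0 : ∀ j t, 0 ≤ F j t) {a b ε : ℝ} (hab : a ≤ b)
    (hε : ∀ t ∈ Set.Icc a b, ∃ j, F j t ≤ ε) :
    ∫ t in a..b, ∏ j, F j t ≤ ε * ∑ j : ι, ∫ t in a..b, ∏ i : {i // i ≠ j}, F i t := by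
  have hcont (j : ι) : Continuous fun t ↦ ∏ i : {i // i ≠ j}, F i t :=
    continuous_finsetProd _ fun _ _ ↦ hF _
  calc ∫ t in a..b, ∏ j, F j t
      ≤ ∫ t in a..b, ε * ∑ j : ι, ∏ i : {i // i ≠ j}, F i t :=
        intervalIntegral.integral_mono_on hab
          ((continuous_finsetProd _ fun _ _ ↦ hF _).intervalIntegrable _ _)
          ((continuous_const.mul <| continuous_finsetSum _ fun j _ ↦ hcont j).intervalIntegrable
            _ _)
          fun t ht ↦ prod_le_mul_sum_prod_ne (fun j ↦ hF0 j t) (hε t ht)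
    _ = ε * ∑ j : ι, ∫ t in a..b, ∏ i : {i // i ≠ j}, F i t := by
        rw [intervalIntegral.integral_const_mul,
          intervalIntegral.integral_finsetSum fun j _ ↦ (hcont j).intervalIntegrable _ _]

lemma integral_prod_ne_le [DecidableEq ι] {f : I → ℤ} {G : ℝ → ℝ} (hG : ∀ x, (G x : ℂ) = expSum f x)
    {M Ξ : ℝ} (hM : 0 ≤ M) (hf : ∀ i, |(f i : ℝ)| ≤ M) {lam : ι → ℝ} (hΞ : 0 < Ξ)
    (hlam : HasFormGap lam M Ξ) (β : ι → ℝ) (d T : ℝ) (j : ι) :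
    ∫ t in d..(d + T), ∏ i : {i // i ≠ j}, G (t * lam i - β i) ≤
      (#{i | f i = 0} : ℝ) ^ (Fintype.card ι - 1) * T +
        (Fintype.card I : ℝ) ^ (Fintype.card ι - 1) / (π * Ξ) := by
  have h := (abs_le.mp (abs_integral_prod_sub_le hG hf hΞ
    (hlam.comp_injective hM (Subtype.val_injective (p := (· ≠ j)))) (fun i ↦ β i) d T)).2
  have hcard : Fintype.card {i // i ≠ j} = Fintype.card ι - 1 := by simp
  rw [hcard] at h
  exact sub_le_iff_le_add'.mp h

lemma le_mul_div_pow_of_sub_le {c m K T : ℝ} {k : ℕ} (hc : 0 < c) (hcm : c ≤ m) (hK : 0 < K)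
    (h : c ^ (k + 1) * T - m ^ (k + 1) / K ≤ c / 2 * (c ^ k * T + m ^ k / K)) :
    T ≤ 3 / K * (m / c) ^ (k + 1) := by
  have hcross : c * (m ^ k / K) ≤ m ^ (k + 1) / K := by
    rw [← mul_div_assoc, pow_succ']
    gcongr
    exact pow_nonneg (hc.le.trans hcm) k
  have hT : c ^ (k + 1) * T ≤ 3 * (m ^ (k + 1) / K) := by
    have : c ^ (k + 1) * T = c * (c ^ k * T) := by ring
    linarith
  calc T ≤ 3 * (m ^ (k + 1) / K) / c ^ (k + 1) := by rwa [le_div_iff₀' (by positivity)]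
    _ = 3 / K * (m / c) ^ (k + 1) := by rw [div_pow]; ring

lemma le_of_forall_exists_le {f : I → ℤ} {G : ℝ → ℝ} (hG : ∀ x, (G x : ℂ) = expSum f x)
    (hG0 : ∀ x, 0 ≤ G x) {M Ξ : ℝ} (hf : ∀ i, |(f i : ℝ)| ≤ M) {lam : ι → ℝ} (hΞ : 0 < Ξ)
    (hlam : HasFormGap lam M Ξ) {ε : ℝ} (hε : Fintype.card ι * ε ≤ (#{i | f i = 0} : ℝ) / 2)
    (hc : 0 < #{i | f i = 0}) {d T : ℝ} (hT : 0 ≤ T) (β : ι → ℝ)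
    (hbad : ∀ t ∈ Set.Icc d (d + T), ∃ j, G (t * lam j - β j) ≤ ε) :
    T ≤ 3 / (π * Ξ) * ((Fintype.card I : ℝ) / #{i | f i = 0}) ^ Fintype.card ι := by
  classical
  obtain ⟨i₀, -⟩ := card_pos.mp hc
  have hM : 0 ≤ M := (abs_nonneg _).trans (hf i₀)
  obtain ⟨j₀, hj₀⟩ := hbad d ⟨le_rfl, by linarith⟩
  have hε0 : 0 ≤ ε := (hG0 _).trans hj₀
  obtain ⟨k, hk⟩ := Nat.exists_eq_add_one.mpr (Fintype.card_pos_iff.mpr ⟨j₀⟩)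
  have hfull := (abs_le.mp (abs_integral_prod_sub_le hG hf hΞ hlam β d T)).1
  have homit := integral_prod_ne_le hG hM hf hΞ hlam β d T
  rw [hk, Nat.cast_add_one] at hε
  simp only [hk, Nat.add_sub_cancel] at hfull homit ⊢
  set c : ℝ := (#{i | f i = 0} : ℝ)
  set m : ℝ := (Fintype.card I : ℝ)
  have hcm : c ≤ m := Nat.cast_le.mpr (card_le_univ _)
  have hGc := continuous_of_ofReal_eq_expSum hG
  refine le_mul_div_pow_of_sub_le (Nat.cast_pos.mpr hc) hcm (by positivity) ?_
  calc c ^ (k + 1) * T - m ^ (k + 1) / (π * Ξ)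
      ≤ ∫ t in d..(d + T), ∏ j, G (t * lam j - β j) := by linarith
    _ ≤ ε * ∑ j : ι, ∫ t in d..(d + T), ∏ i : {i // i ≠ j}, G (t * lam i - β i) :=
        integral_prod_le_mul_sum_integral_prod_ne (F := fun j t ↦ G (t * lam j - β j))
          (fun j ↦ hGc.comp (by fun_prop)) (fun _ _ ↦ hG0 _) (by linarith) hbad
    _ ≤ ε * ∑ _j : ι, (c ^ k * T + m ^ k / (π * Ξ)) := by gcongr with j; exact homit j
    _ = (k + 1) * ε * (c ^ k * T + m ^ k / (π * Ξ)) := by simp [hk]; ring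
    _ ≤ c / 2 * (c ^ k * T + m ^ k / (π * Ξ)) := by gcongr

end UnionBound

section Kronecker

variable {ι : Type*} [Fintype ι]

lemma mul_one_div_pow_le_of_le_pow {N n δ s : ℝ} {k : ℕ} (hn : 0 < n) (hδ : 0 < δ) (hs : 0 < s)
    (h : 14 * N * n * s ≤ (2 * n * δ) ^ k) :
    N * (1 / (2 * δ)) ^ k ≤ n ^ k / (7 * n * s) / 2 := by
  have hcancel : (2 * n * δ) ^ k * (1 / (2 * δ)) ^ k = n ^ k := by
    rw [← mul_pow]
    congr 1
    field_simp
  rw [div_div, le_div_iff₀ (by positivity), ← hcancel]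
  calc N * (1 / (2 * δ)) ^ k * (7 * n * s * 2)
      = 14 * N * n * s * (1 / (2 * δ)) ^ k := by ring
    _ ≤ (2 * n * δ) ^ k * (1 / (2 * δ)) ^ k := by gcongr

lemma exists_forall_nearestIntDist_le {n r : ℕ} (hn : 0 < n) (hr : 0 < r) {lam : ι → ℝ} {Ξ δ : ℝ}
    (hΞ : 0 < Ξ) (hδ : 0 < δ) (hlam : HasFormGap lam (n * r) Ξ)
    (hcard : 14 * Fintype.card ι * n * √r ≤ (2 * n * δ) ^ (2 * r)) {T : ℝ}
    (hT : 3 / (π * Ξ) * (7 * n * √r) ^ Fintype.card ι < T) (d : ℝ) (β : ι → ℝ) :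
    ∃ t ∈ Set.Icc d (d + T), ∀ j, nearestIntDist (t * lam j - β j) ≤ δ := by
  classical
  set f : Fin n → ℤ := fun k ↦ k
  have hf (k l : Fin n) : |(f k - f l : ℝ)| ≤ n := by
    have hk : (k : ℝ) < n := by exact_mod_cast k.2
    have hl : (l : ℝ) < n := by exact_mod_cast l.2
    simpa [f] using abs_sub_le_of_nonneg_of_le k.1.cast_nonneg hk.le l.1.cast_nonneg hl.le
  set c : ℝ := (#{u | powFreq f r u = 0} : ℝ)
  have hc : (n : ℝ) ^ (2 * r) / (7 * n * √r) ≤ c := by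
    simpa using card_pow_div_le_card_powFreq_eq_zero (Nat.one_le_cast.mpr hn) hf hr
  have hc0 : 0 < c := hc.trans_lt' (by positivity)
  by_contra! hfar
  have hT0 : 0 < T := hT.trans_le' (by positivity)
  have hε_card : Fintype.card ι * (1 / (2 * δ)) ^ (2 * r) ≤ c / 2 :=
    (mul_one_div_pow_le_of_le_pow (by positivity) hδ (by positivity) hcard).trans (by gcongr)
  have hsmall (t : ℝ) (ht : t ∈ Set.Icc d (d + T)) :
      ∃ j, ‖expSum f (t * lam j - β j)‖ ^ (2 * r) ≤ (1 / (2 * δ)) ^ (2 * r) := by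
    obtain ⟨j, hj⟩ := hfar t ht
    exact ⟨j, pow_le_pow_left₀ (norm_nonneg _) (norm_expSum_fin_le n hδ hj.le) _⟩
  have hratio : (Fintype.card (Fin r → Fin n × Fin n) : ℝ) / c ≤ 7 * n * √r := by
    have hcard_pow : (Fintype.card (Fin r → Fin n × Fin n) : ℝ) = n ^ (2 * r) := by
      simp [pow_mul, sq]
    rwa [hcard_pow, div_le_comm₀ hc0 (by positivity)]
  refine hT.not_ge <| (le_of_forall_exists_le (norm_expSum_pow f r) (fun _ ↦ by positivity)
    (abs_powFreq_le hf r) hΞ hlam hε_card (Nat.cast_pos.mp hc0) hT0.le β hsmall).trans ?_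
  gcongr

lemma fourteen_mul_le_pow {N ω n : ℝ} {r : ℕ} (hN : 0 ≤ N) (hω : 0 < ω) (hωn : 2 * ω ≤ n)
    (hnω : n ≤ 3 * ω) (hr : 100 * (N * ω) ≤ exp r) :
    14 * N * n * √r ≤ (2 * n * (1 / ω)) ^ (2 * r) := by
  have hexp : exp r ≤ 4 ^ r := by
    rw [← exp_one_pow]
    gcongr
    linarith [exp_one_lt_d9]
  have hsqrt : √(r : ℝ) ≤ 4 ^ r := by
    refine sqrt_le_iff.mpr ⟨by positivity, ?_⟩
    have hr4 : (r : ℝ) ≤ 4 ^ r := by exact_mod_cast (Nat.lt_pow_self (by norm_num : 1 < 4)).le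
    nlinarith [one_le_pow₀ (n := r) (by norm_num : (1 : ℝ) ≤ 4)]
  have hbase : 4 ≤ 2 * n * (1 / ω) := by
    rw [mul_one_div, le_div_iff₀ hω]
    linarith
  calc 14 * N * n * √r ≤ 14 * N * (3 * ω) * √r := by gcongr
    _ = 42 * (N * ω) * √r := by ring
    _ ≤ 4 ^ r * 4 ^ r := by
        gcongr
        linarith [mul_nonneg hN hω.le]
    _ = 4 ^ (2 * r) := by rw [two_mul, pow_add]
    _ ≤ (2 * n * (1 / ω)) ^ (2 * r) := by gcongr

lemma seven_mul_mul_sqrt_le {C₀ ω n r L : ℝ} (hC₀ : 0 < C₀) (hC₀_le : C₀ ≤ 1 / 100) (hω : 0 ≤ ω)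
    (hnω : n ≤ 3 * ω) (hL : 0 ≤ L) (hrL : r ≤ 2 * L) :
    7 * n * √r ≤ 2 * √3 * ω / C₀ * √L := by
  have hsqrt : √r ≤ 2 * √L := by
    refine sqrt_le_iff.mpr ⟨by positivity, ?_⟩
    rw [mul_pow, sq_sqrt hL]
    linarith
  have hcoef : 42 ≤ 2 * √3 / C₀ := by
    have : 1 ≤ √(3 : ℝ) := one_le_sqrt.mpr (by norm_num)
    rw [le_div_iff₀ hC₀]
    linarith
  calc 7 * n * √r ≤ 7 * (3 * ω) * (2 * √L) := by gcongr
    _ = 42 * (ω * √L) := by ring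
    _ ≤ 2 * √3 / C₀ * (ω * √L) := by gcongr
    _ = 2 * √3 * ω / C₀ * √L := by ring

theorem localized_kronecker_general [Nonempty ι] {C₀ ω : ℝ} (hC₀ : 0 < C₀) (hC₀_le : C₀ ≤ 1 / 100)
    (hω : 1 ≤ ω) {lam : ι → ℝ} {Ξ : ℝ} (hΞ : 0 < Ξ)
    (hlam : HasFormGap lam (6 * ω * log (Fintype.card ι * ω / C₀)) Ξ) {T : ℝ}
    (hT : 3 / (π * Ξ) *
      ((2 * √3 * ω / C₀) * √(log (Fintype.card ι * ω / C₀))) ^ Fintype.card ι < T)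
    (d : ℝ) (β : ι → ℝ) :
    ∃ t ∈ Set.Icc d (d + T), ∀ j, nearestIntDist (t * lam j - β j) ≤ 1 / ω := by
  set N : ℝ := (Fintype.card ι : ℝ)
  have hN : 1 ≤ N := Nat.one_le_cast.mpr Fintype.card_pos
  set L := log (N * ω / C₀) with hL
  have hexpL : 100 * (N * ω) ≤ exp L := by
    rw [hL, exp_log (by positivity), le_div_iff₀ hC₀]
    nlinarith [mul_le_mul_of_nonneg_left hC₀_le (by positivity : 0 ≤ 100 * (N * ω))]
  have hL1 : 1 ≤ L := by
    rw [← exp_le_exp]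
    nlinarith [exp_one_lt_d9]
  obtain ⟨n, hn⟩ : ∃ n, n = ⌈2 * ω⌉₊ := ⟨_, rfl⟩
  obtain ⟨r, hr⟩ : ∃ r, r = ⌈L⌉₊ := ⟨_, rfl⟩
  have hωn : 2 * ω ≤ n := hn ▸ Nat.le_ceil _
  have hnω : (n : ℝ) ≤ 3 * ω := by
    linarith [hn ▸ Nat.ceil_lt_add_one (by linarith : 0 ≤ 2 * ω)]
  have hLr : L ≤ r := hr ▸ Nat.le_ceil _
  have hrL : (r : ℝ) ≤ 2 * L := by
    linarith [hr ▸ Nat.ceil_lt_add_one (by linarith : 0 ≤ L)]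
  have hn0 : 0 < n := Nat.cast_pos (α := ℝ).mp (by linarith)
  have hr0 : 0 < r := Nat.cast_pos (α := ℝ).mp (by linarith)
  refine exists_forall_nearestIntDist_le hn0 hr0 hΞ (by positivity) (hlam.mono ?_) ?_
    (hT.trans_le' ?_) d β
  · have : ω * r ≤ ω * (2 * L) := by gcongr
    have : n * (r : ℝ) ≤ 3 * ω * r := by gcongr
    linarith
  · exact fourteen_mul_le_pow (by linarith) (by linarith) hωn hnω (hexpL.trans (exp_monotone hLr))
  · refine mul_le_mul_of_nonneg_left (pow_le_pow_left₀ (by positivity) ?_ _) (by positivity)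
    exact seven_mul_mul_sqrt_le hC₀ hC₀_le (by linarith) hnω (by linarith) hrL

end Kronecker

theorem localized_kronecker :
    ∃ C₀ : ℝ, 0 < C₀ ∧
      ∀ N ω : ℕ, 0 < N → 0 < ω → ∀ lam : Fin N → ℝ,
        (∀ u : Fin N → ℤ,
            (∀ ℓ, (|u ℓ| : ℝ) ≤ 6 * ω * Real.log (N * ω / C₀)) →
            (∑ ℓ, lam ℓ * u ℓ) = 0 → u = 0) →
        ∀ Ξ : ℝ,
          IsLeast {x : ℝ | ∃ u : Fin N → ℤ,
              (∀ ℓ, (|u ℓ| : ℝ) ≤ 6 * ω * Real.log (N * ω / C₀)) ∧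
              (∑ ℓ, lam ℓ * u ℓ) ≠ 0 ∧ x = |∑ ℓ, lam ℓ * u ℓ|} Ξ →
          ∀ T : ℝ,
            T > 3 / (Real.pi * Ξ) *
                ((2 * Real.sqrt 3 * ω / C₀) * Real.sqrt (Real.log (N * ω / C₀))) ^ N →
            ∀ d : ℝ, ∀ β : Fin N → ℝ,
              ∃ t ∈ Set.Icc d (d + T),
                ∀ j, nearestIntDist (t * lam j - β j) ≤ 1 / ω := by
  refine ⟨1 / 100, by norm_num, fun N ω hN hω lam hrel Ξ hΞ T hT d β ↦ ?_⟩
  have : NeZero N := ⟨hN.ne'⟩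
  have hΞ0 : 0 < Ξ := by
    obtain ⟨u, -, hu, rfl⟩ := hΞ.1
    exact abs_pos.mpr hu
  have hgap : HasFormGap lam (6 * ω * log (N * ω / (1 / 100))) Ξ :=
    fun v hv hv0 ↦ hΞ.2 ⟨v, hv, mt (hrel v hv) hv0, rfl⟩
  exact localized_kronecker_general (by norm_num) le_rfl (Nat.one_le_cast.mpr hω) hΞ0
    (by rwa [Fintype.card_fin]) (by rwa [Fintype.card_fin]) d β
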